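/- arXiv:1602.03250 — 5 statements merged into one kernel-verified Lean document; each statement's English description precedes it below -/
import Mathlib

section
/- Let M be a right P-module admitting two projective bases ((m_i)_{i=1}^s, (α_i)_{i=1}^s) and ((n_j)_{j=1}^t, (β_j)_{j=1}^t). Then for every endomorphism T of M as a right P-module, φ(Σ_{i=1}^s α_i(T(m_i))) = φ(Σ_{j=1}^t β_j(T(n_j))); that is, the pseudotrace φ_M(T) does not depend on the choice of projective basis of M. -/
open MulOpposite

/-- The pseudotrace `φ_M(T)` of a right `P`-module endomorphism `T` of `M` does not
depend on the choice of projective basis of `M`: if `((m_i), (α_i))` and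
`((n_j), (β_j))` are two projective bases of `M`, then
`φ(Σ_i α_i (T (m_i))) = φ(Σ_j β_j (T (n_j)))`.
Right `P`-modules are formalized as left modules over the opposite algebra `Pᵐᵒᵖ`. -/
theorem pseudotrace_independent_of_projective_basis
    (P : Type*) [Ring P] [Algebra ℂ P] [FiniteDimensional ℂ P]
    (φ : P →ₗ[ℂ] ℂ) (hφ : ∀ p q : P, φ (p * q) = φ (q * p))
    (M : Type*) [AddCommGroup M] [Module Pᵐᵒᵖ M]
    (s t : ℕ) (m : Fin s → M) (α : Fin s → (M →ₗ[Pᵐᵒᵖ] P))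
    (n : Fin t → M) (β : Fin t → (M →ₗ[Pᵐᵒᵖ] P))
    (hmα : ∀ x : M, x = ∑ i, op (α i x) • m i)
    (hnβ : ∀ x : M, x = ∑ j, op (β j x) • n j)
    (T : M →ₗ[Pᵐᵒᵖ] M) :
    φ (∑ i, α i (T (m i))) = φ (∑ j, β j (T (n j))) := by
  have hα : ∀ i, α i (T (m i)) = ∑ j, α i (n j) * β j (T (m i)) := fun i => by
    conv_lhs => rw [hnβ (T (m i))]
    simp only [map_sum, map_smul, op_smul_eq_mul]
  have hβ : ∀ j, β j (T (n j)) = ∑ i, β j (T (m i)) * α i (n j) := fun j => by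
    conv_lhs => rw [hmα (n j)]
    simp only [map_sum, map_smul, op_smul_eq_mul]
  simp only [hα, hβ, map_sum]
  rw [Finset.sum_comm]
  exact Finset.sum_congr rfl fun j _ => Finset.sum_congr rfl fun i _ => hφ _ _
end

section
/- Let m ≥ 1 be an integer, let τ ∈ ℍ, and let z ∈ ℂ satisfy 0 < Im z < Im τ (equivalently |q_τ| < |q_z| < 1; such a z lies off the lattice Λ_τ). Then ℘_m(z;τ) = (−1)^m·( P_m(q_z; q_τ) − D_m(z;τ) ), where D_m(z;τ) = ∂^{m−1}/∂z^{m−1}( G₂(τ)·z − πi ), i.e. D₁(z;τ) = G₂(τ)·z − πi, D₂(z;τ) = G₂(τ), and D_m(z;τ) = 0 for m ≥ 3. -/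
open Complex Real

/-- The lattice point `kτ + l` associated to `p = (k, l) ∈ ℤ²`. -/
noncomputable def latticePt (τ : ℂ) (p : ℤ × ℤ) : ℂ := (p.1 : ℂ) * τ + (p.2 : ℂ)

/-- The Weierstrass function `℘₁(z;τ)`. -/
noncomputable def wp1 (z τ : ℂ) : ℂ :=
  1 / z + ∑' p : {p : ℤ × ℤ // p ≠ (0, 0)},
    (1 / (z - latticePt τ p.1) + 1 / latticePt τ p.1 + z / (latticePt τ p.1) ^ 2)

/-- The Weierstrass function `℘₂(z;τ)`. -/
noncomputable def wp2 (z τ : ℂ) : ℂ :=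
  1 / z ^ 2 + ∑' p : {p : ℤ × ℤ // p ≠ (0, 0)},
    (1 / (z - latticePt τ p.1) ^ 2 - 1 / (latticePt τ p.1) ^ 2)

/-- The Weierstrass function `℘_m(z;τ)` for `m ≥ 3`. -/
noncomputable def wpHigh (m : ℕ) (z τ : ℂ) : ℂ :=
  ∑' p : ℤ × ℤ, 1 / (z - latticePt τ p) ^ m

/-- The Weierstrass function `℘_m(z;τ)`, `m ≥ 1`. -/
noncomputable def wp (m : ℕ) (z τ : ℂ) : ℂ :=
  if m = 1 then wp1 z τ else if m = 2 then wp2 z τ else wpHigh m z τ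

/-- The Eisenstein series `G_k(τ) = Σ_{(m,l) ≠ (0,0)} (mτ+l)^{-k}` (used for `k ≥ 3`). -/
noncomputable def Eis (k : ℕ) (τ : ℂ) : ℂ :=
  ∑' p : {p : ℤ × ℤ // p ≠ (0, 0)}, 1 / (latticePt τ p.1) ^ k

/-- The quasimodular Eisenstein series
`G₂(τ) = π²/3 + Σ_{m≠0} Σ_{l∈ℤ} (mτ+l)^{-2}` (iterated sum). -/
noncomputable def G2 (τ : ℂ) : ℂ :=
  (Real.pi : ℂ) ^ 2 / 3 +
    ∑' m : {m : ℤ // m ≠ 0}, ∑' l : ℤ, 1 / (((m : ℤ) : ℂ) * τ + (l : ℂ)) ^ 2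

/-- `q_z = e^{2πiz}`. -/
noncomputable def qexp (z : ℂ) : ℂ := Complex.exp (2 * Real.pi * Complex.I * z)

/-- The series `P_{m+1}(x;q) = (2πi)^{m+1} Σ_{l≥1} ( (l^m/m!)·x^l/(1−q^l)
− (−1)^m·(l^m/m!)·q^l·x^{−l}/(1−q^l) )`.  Note the index shift: `Pser m = P_{m+1}`. -/
noncomputable def Pser (m : ℕ) (x q : ℂ) : ℂ :=
  (2 * Real.pi * Complex.I) ^ (m + 1) *
    ∑' l : ℕ,
      ((((l + 1 : ℕ) : ℂ) ^ m / (Nat.factorial m : ℂ)) * x ^ (l + 1) / (1 - q ^ (l + 1)) -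
        (-1 : ℂ) ^ m * (((l + 1 : ℕ) : ℂ) ^ m / (Nat.factorial m : ℂ)) * q ^ (l + 1) *
          x ^ (-((l : ℤ) + 1)) / (1 - q ^ (l + 1)))

/-- `D_m(z;τ) = ∂^{m−1}/∂z^{m−1}( G₂(τ)·z − πi )`. -/
noncomputable def Dterm (m : ℕ) (z τ : ℂ) : ℂ :=
  if m = 1 then G2 τ * z - Real.pi * Complex.I else if m = 2 then G2 τ else 0


open Filter Topology

lemma summable_inv_latticePt_pow {τ : ℂ} (hτ : 0 < τ.im) {m : ℕ} (hm : 3 ≤ m) :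
    Summable fun p : ℤ × ℤ ↦ (‖latticePt τ p‖ ^ m)⁻¹ := by
  refine (summable_prod_eisSummand hm ⟨τ, hτ⟩).norm.congr fun p ↦ ?_
  simp [EisensteinSeries.eisSummand, latticePt]

lemma latticePt_ne_zero {τ : ℂ} (hτ : 0 < τ.im) {p : ℤ × ℤ} (hp : p ≠ (0, 0)) :
    latticePt τ p ≠ 0 := by
  intro h
  apply hp
  have him := congrArg Complex.im h
  have hre := congrArg Complex.re h
  simp only [latticePt, add_im, mul_im, intCast_re, intCast_im, zero_mul, add_zero, zero_im,
    mul_eq_zero, Int.cast_eq_zero, hτ.ne', or_false] at him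
  simp only [latticePt, him, Int.cast_zero, zero_mul, zero_add, intCast_re, zero_re,
    Int.cast_eq_zero] at hre
  exact Prod.ext him hre

lemma eventually_le_norm_latticePt {τ : ℂ} (hτ : 0 < τ.im) (R : ℝ) :
    ∀ᶠ p in cofinite, R ≤ ‖latticePt τ p‖ := by
  have hR : 0 < max R 1 := by positivity
  have h := (summable_inv_latticePt_pow hτ le_rfl).tendsto_cofinite_zero.eventually_lt_const
    (u := ((max R 1) ^ 3)⁻¹) (by positivity)
  have h0 : ∀ᶠ p : ℤ × ℤ in cofinite, p ≠ (0, 0) := (Set.finite_singleton _).compl_mem_cofinite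
  filter_upwards [h, h0] with p hp hp0
  have hpos : 0 < ‖latticePt τ p‖ := norm_pos_iff.mpr (latticePt_ne_zero hτ hp0)
  rw [inv_lt_inv₀ (by positivity) (by positivity)] at hp
  exact (le_max_left _ _).trans (lt_of_pow_lt_pow_left₀ 3 hpos.le hp).le

lemma half_norm_le_norm_sub {z w : ℂ} (h : 2 * ‖z‖ ≤ ‖w‖) : ‖w‖ / 2 ≤ ‖z - w‖ := by
  have := norm_sub_norm_le w z
  rw [norm_sub_rev] at this
  linarith

lemma summable_of_norm_le_inv_latticePt_pow {τ : ℂ} (hτ : 0 < τ.im) {f : ℤ × ℤ → ℂ} {m : ℕ}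
    (hm : 3 ≤ m) (z : ℂ) (C : ℝ)
    (hf : ∀ p, 0 < ‖latticePt τ p‖ → ‖latticePt τ p‖ / 2 ≤ ‖z - latticePt τ p‖ →
      2 * ‖z‖ ≤ ‖latticePt τ p‖ → ‖f p‖ ≤ C * (‖latticePt τ p‖ ^ m)⁻¹) :
    Summable f := by
  refine Summable.of_norm_bounded_eventually ((summable_inv_latticePt_pow hτ hm).mul_left C) ?_
  filter_upwards [eventually_le_norm_latticePt hτ (2 * ‖z‖),
    eventually_le_norm_latticePt hτ 1] with p hp hp1
  exact hf p (by linarith) (half_norm_le_norm_sub hp) hp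

lemma summable_wpHigh {τ : ℂ} (hτ : 0 < τ.im) (z : ℂ) {m : ℕ} (hm : 3 ≤ m) :
    Summable fun p : ℤ × ℤ ↦ 1 / (z - latticePt τ p) ^ m := by
  refine summable_of_norm_le_inv_latticePt_pow hτ hm z (2 ^ m) fun p h0 h1 _ ↦ ?_
  rw [norm_div, norm_one, norm_pow, one_div, ← inv_inv (2 ^ m : ℝ), ← mul_inv, inv_mul_eq_div,
    ← div_pow]
  gcongr

lemma summable_wp2 {τ : ℂ} (hτ : 0 < τ.im) (z : ℂ) :
    Summable fun p : ℤ × ℤ ↦ 1 / (z - latticePt τ p) ^ 2 - 1 / (latticePt τ p) ^ 2 := by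
  refine summable_of_norm_le_inv_latticePt_pow hτ le_rfl z (10 * ‖z‖) fun p h0 h1 h2 ↦ ?_
  generalize latticePt τ p = w at *
  have hw : w ≠ 0 := norm_pos_iff.mp h0
  have hzw : z - w ≠ 0 := norm_pos_iff.mp (by linarith)
  have key : 1 / (z - w) ^ 2 - 1 / w ^ 2 = z * (2 * w - z) / (w ^ 2 * (z - w) ^ 2) := by
    field_simp
    ring
  have hnum : ‖2 * w - z‖ ≤ 5 / 2 * ‖w‖ := by
    have := norm_sub_le (2 * w) z
    rw [norm_mul, Complex.norm_ofNat] at this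
    linarith
  rw [key, norm_div, norm_mul, norm_mul, norm_pow, norm_pow]
  calc ‖z‖ * ‖2 * w - z‖ / (‖w‖ ^ 2 * ‖z - w‖ ^ 2)
      ≤ ‖z‖ * (5 / 2 * ‖w‖) / (‖w‖ ^ 2 * (‖w‖ / 2) ^ 2) := by gcongr
    _ = 10 * ‖z‖ * (‖w‖ ^ 3)⁻¹ := by field_simp; ring

lemma summable_wp1 {τ : ℂ} (hτ : 0 < τ.im) (z : ℂ) :
    Summable fun p : ℤ × ℤ ↦
      1 / (z - latticePt τ p) + 1 / latticePt τ p + z / (latticePt τ p) ^ 2 := by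
  refine summable_of_norm_le_inv_latticePt_pow hτ le_rfl z (2 * ‖z‖ ^ 2) fun p h0 h1 h2 ↦ ?_
  generalize latticePt τ p = w at *
  have hw : w ≠ 0 := norm_pos_iff.mp h0
  have hzw : z - w ≠ 0 := norm_pos_iff.mp (by linarith)
  have key : 1 / (z - w) + 1 / w + z / w ^ 2 = z ^ 2 / (w ^ 2 * (z - w)) := by
    field_simp
    ring
  rw [key, norm_div, norm_mul, norm_pow, norm_pow]
  calc ‖z‖ ^ 2 / (‖w‖ ^ 2 * ‖z - w‖) ≤ ‖z‖ ^ 2 / (‖w‖ ^ 2 * (‖w‖ / 2)) := by gcongr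
    _ = 2 * ‖z‖ ^ 2 * (‖w‖ ^ 3)⁻¹ := by field_simp

lemma apply_add_tsum_subtype_ne {ι : Type*} {f : ι → ℂ} (hf : Summable f) (a : ι) :
    f a + ∑' i : {i // i ≠ a}, f i = ∑' i, f i := by
  have h := hf.tsum_subtype_add_tsum_subtype_compl {a}
  rwa [tsum_singleton] at h

lemma wp1_eq_tsum {τ : ℂ} (hτ : 0 < τ.im) (z : ℂ) :
    wp1 z τ = ∑' k : ℤ, ∑' l : ℤ, (1 / (z - latticePt τ (k, l)) + 1 / latticePt τ (k, l) +
      z / (latticePt τ (k, l)) ^ 2) := by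
  rw [← (summable_wp1 hτ z).tsum_prod, ← apply_add_tsum_subtype_ne (summable_wp1 hτ z) (0, 0)]
  simp [wp1, latticePt]

lemma wp2_eq_tsum {τ : ℂ} (hτ : 0 < τ.im) (z : ℂ) :
    wp2 z τ = ∑' k : ℤ, ∑' l : ℤ, (1 / (z - latticePt τ (k, l)) ^ 2 -
      1 / (latticePt τ (k, l)) ^ 2) := by
  rw [← (summable_wp2 hτ z).tsum_prod, ← apply_add_tsum_subtype_ne (summable_wp2 hτ z) (0, 0)]
  simp [wp2, latticePt]

lemma norm_qexp_lt_one {z : ℂ} (hz : 0 < z.im) : ‖qexp z‖ < 1 :=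
  UpperHalfPlane.norm_exp_two_pi_I_lt_one ⟨z, hz⟩

lemma qexp_add (z w : ℂ) : qexp (z + w) = qexp z * qexp w := by
  rw [qexp, mul_add, Complex.exp_add, qexp, qexp]

lemma qexp_sub (z w : ℂ) : qexp (z - w) = qexp z / qexp w := by
  rw [qexp, mul_sub, Complex.exp_sub, qexp, qexp]

lemma qexp_nat_mul (n : ℕ) (z : ℂ) : qexp (n * z) = qexp z ^ n := by
  rw [qexp, qexp, ← Complex.exp_nat_mul]
  ring_nf

/-- The Lambert-type series `∑_{n≥1} n^s y^n / (1 - q^n)`. -/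
noncomputable def lambertSum (s : ℕ) (y q : ℂ) : ℂ :=
  ∑' n : ℕ, ((n + 1 : ℕ) : ℂ) ^ s * y ^ (n + 1) / (1 - q ^ (n + 1))

lemma summable_succ_pow_mul_pow (s : ℕ) {y : ℂ} (hy : ‖y‖ < 1) :
    Summable fun n : ℕ ↦ ‖((n + 1 : ℕ) : ℂ) ^ s * y ^ (n + 1)‖ :=
  (summable_nat_add_iff 1).mpr (summable_norm_pow_mul_geometric_of_norm_lt_one s hy)

lemma summable_lambert_double (s : ℕ) {y q : ℂ} (hy : ‖y‖ < 1) (hq : ‖q‖ < 1) :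
    Summable fun p : ℕ × ℕ ↦ ((p.2 + 1 : ℕ) : ℂ) ^ s * y ^ (p.2 + 1) * (q ^ (p.2 + 1)) ^ p.1 := by
  have h := (summable_geometric_of_lt_one (norm_nonneg q) hq).mul_of_nonneg
    (summable_succ_pow_mul_pow s hy) (fun _ ↦ by positivity) (fun _ ↦ norm_nonneg _)
  refine Summable.of_norm_bounded h fun p ↦ ?_
  rw [norm_mul, mul_comm, norm_pow, norm_pow]
  gcongr
  exact pow_le_of_le_one (norm_nonneg q) hq.le (Nat.succ_ne_zero _)

lemma tsum_lambert_double_column (s : ℕ) (y : ℂ) {q : ℂ} (hq : ‖q‖ < 1) (n : ℕ) :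
    ∑' j : ℕ, ((n + 1 : ℕ) : ℂ) ^ s * y ^ (n + 1) * (q ^ (n + 1)) ^ j =
      ((n + 1 : ℕ) : ℂ) ^ s * y ^ (n + 1) / (1 - q ^ (n + 1)) := by
  rw [tsum_mul_left, tsum_geometric_of_norm_lt_one, div_eq_mul_inv]
  rw [norm_pow]
  exact pow_lt_one₀ (norm_nonneg q) hq (Nat.succ_ne_zero _)

lemma hasSum_lambert_terms (s : ℕ) {y q : ℂ} (hy : ‖y‖ < 1) (hq : ‖q‖ < 1) :
    HasSum (fun n : ℕ ↦ ((n + 1 : ℕ) : ℂ) ^ s * y ^ (n + 1) / (1 - q ^ (n + 1)))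
      (lambertSum s y q) := by
  refine Summable.hasSum ((summable_lambert_double s hy hq).prod_symm.prod.congr fun n ↦ ?_)
  exact tsum_lambert_double_column s y hq n

lemma hasSum_lambertSum (s : ℕ) {y q : ℂ} (hy : ‖y‖ < 1) (hq : ‖q‖ < 1) :
    HasSum (fun j : ℕ ↦ ∑' n : ℕ, ((n + 1 : ℕ) : ℂ) ^ s * (y * q ^ j) ^ (n + 1))
      (lambertSum s y q) := by
  have hS := summable_lambert_double s hy hq
  have key : lambertSum s y q =
      ∑' p : ℕ × ℕ, ((p.2 + 1 : ℕ) : ℂ) ^ s * y ^ (p.2 + 1) * (q ^ (p.2 + 1)) ^ p.1 := by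
    rw [lambertSum, ← (Equiv.prodComm ℕ ℕ).tsum_eq]
    rw [Summable.tsum_prod (by exact hS.prod_symm)]
    exact tsum_congr fun n ↦ (tsum_lambert_double_column s y hq n).symm
  rw [key]
  refine (hS.hasSum.prod_fiberwise fun j ↦ (hS.prod_factor j).hasSum).congr_fun fun j ↦ ?_
  refine tsum_congr fun n ↦ ?_
  ring

lemma Pser_eq_lambertSum (s : ℕ) {x q : ℂ} (hx : ‖x‖ < 1) (hqx : ‖q / x‖ < 1)
    (hq : ‖q‖ < 1) :
    Pser s x q = (2 * π * I) ^ (s + 1) / (Nat.factorial s : ℂ) *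
      (lambertSum s x q - (-1) ^ s * lambertSum s (q / x) q) := by
  rw [Pser, div_mul_eq_mul_div, mul_div_assoc]
  congr 1
  refine HasSum.tsum_eq ?_
  refine (((hasSum_lambert_terms s hx hq).sub
    ((hasSum_lambert_terms s hqx hq).mul_left ((-1) ^ s))).div_const (Nat.factorial s : ℂ)).congr_fun
    fun n ↦ ?_
  rw [zpow_neg, div_pow, show ((n : ℤ) + 1) = ((n + 1 : ℕ) : ℤ) by push_cast; rfl, zpow_natCast]
  ring

lemma hasSum_int_of_neg_of_succ {f : ℤ → ℂ} {a b : ℂ} (ha : HasSum (fun n : ℕ ↦ f (-n)) a)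
    (hb : HasSum (fun n : ℕ ↦ f (n + 1)) b) : HasSum f (a + b) := by
  rw [← (Equiv.neg ℤ).hasSum_iff]
  refine HasSum.of_nat_of_neg_add_one ha ?_
  simpa [Function.comp_def, add_comm] using hb

lemma tsum_one_div_sub_int_pow {s : ℕ} (hs : 1 ≤ s) {w : ℂ} (hw : 0 < w.im) :
    ∑' l : ℤ, 1 / (w - l) ^ (s + 1) =
      (-1) ^ (s + 1) * ((2 * π * I) ^ (s + 1) / (Nat.factorial s : ℂ)) *
        ∑' n : ℕ, ((n + 1 : ℕ) : ℂ) ^ s * qexp w ^ (n + 1) := by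
  have h := EisensteinSeries.qExpansion_identity_pnat hs ⟨w, hw⟩
  rw [tsum_pnat_eq_tsum_succ (f := fun n : ℕ ↦ (n : ℂ) ^ s *
    cexp (2 * π * I * (⟨w, hw⟩ : UpperHalfPlane)) ^ n), ← tsum_comp_neg] at h
  rw [show (-1 : ℂ) ^ (s + 1) * ((2 * π * I) ^ (s + 1) / (Nat.factorial s : ℂ)) =
    (-2 * π * I) ^ (s + 1) / (Nat.factorial s : ℂ) by rw [← mul_div_assoc, ← mul_pow]; ring_nf]
  simpa [sub_eq_add_neg, qexp] using h

lemma tsum_one_div_sub_int_pow_of_im_neg {s : ℕ} (hs : 1 ≤ s) {w : ℂ} (hw : w.im < 0) :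
    ∑' l : ℤ, 1 / (w - l) ^ (s + 1) = (2 * π * I) ^ (s + 1) / (Nat.factorial s : ℂ) *
      ∑' n : ℕ, ((n + 1 : ℕ) : ℂ) ^ s * qexp (-w) ^ (n + 1) := by
  have h := tsum_one_div_sub_int_pow hs (w := -w) (by simpa using hw)
  have hsq : (-1 : ℂ) ^ (s + 1) * (-1) ^ (s + 1) = 1 := by rw [← mul_pow]; simp
  rw [← tsum_comp_neg]
  calc ∑' l : ℤ, 1 / (w - (-l : ℤ)) ^ (s + 1)
      = ∑' l : ℤ, (-1) ^ (s + 1) * (1 / (-w - l) ^ (s + 1)) := by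
        refine tsum_congr fun l ↦ ?_
        rw [show w - (-l : ℤ) = (-1) * (-w - l) by push_cast; ring, mul_pow, one_div, mul_inv,
          inv_eq_of_mul_eq_one_left hsq, one_div]
    _ = _ := by rw [tsum_mul_left, h, ← mul_assoc, ← mul_assoc, hsq, one_mul]

lemma hasSum_row_pow {s : ℕ} (hs : 1 ≤ s) {τ z : ℂ} (hz1 : 0 < z.im) (hz2 : z.im < τ.im) :
    HasSum (fun k : ℤ ↦ ∑' l : ℤ, 1 / (z - latticePt τ (k, l)) ^ (s + 1))
      ((-1) ^ (s + 1) * Pser s (qexp z) (qexp τ)) := by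
  have hτ : 0 < τ.im := hz1.trans hz2
  have hq := norm_qexp_lt_one hτ
  have hx := norm_qexp_lt_one hz1
  have hqx : ‖qexp τ / qexp z‖ < 1 := by
    rw [← qexp_sub]
    exact norm_qexp_lt_one (by simpa using hz2)
  have hsq : (-1 : ℂ) ^ (s + 1) * (-1) ^ s = -1 := by
    rw [pow_succ, mul_right_comm, ← mul_pow]; simp
  have hP : (-1) ^ (s + 1) * Pser s (qexp z) (qexp τ) =
      (-1) ^ (s + 1) * ((2 * π * I) ^ (s + 1) / (Nat.factorial s : ℂ)) *
        lambertSum s (qexp z) (qexp τ) + (2 * π * I) ^ (s + 1) / (Nat.factorial s : ℂ) *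
        lambertSum s (qexp τ / qexp z) (qexp τ) := by
    rw [Pser_eq_lambertSum s hx hqx hq]
    linear_combination (-(2 * π * I) ^ (s + 1) / (Nat.factorial s : ℂ) *
        lambertSum s (qexp τ / qexp z) (qexp τ)) * hsq
  rw [hP]
  apply hasSum_int_of_neg_of_succ
  · refine ((hasSum_lambertSum s hx hq).mul_left
      ((-1) ^ (s + 1) * ((2 * π * I) ^ (s + 1) / (Nat.factorial s : ℂ)))).congr_fun fun j ↦ ?_
    have him : 0 < (z + j * τ).im := by
      simp only [add_im, mul_im, natCast_re, natCast_im, zero_mul, add_zero]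
      positivity
    rw [← qexp_nat_mul, ← qexp_add, ← tsum_one_div_sub_int_pow hs him]
    refine tsum_congr fun l ↦ ?_
    simp only [latticePt]
    push_cast
    ring_nf
  · refine ((hasSum_lambertSum s hqx hq).mul_left
      ((2 * π * I) ^ (s + 1) / (Nat.factorial s : ℂ))).congr_fun fun j ↦ ?_
    have him : (z - (j + 1) * τ).im < 0 := by
      simp only [sub_im, mul_im, add_re, add_im, natCast_re, natCast_im, one_re, one_im, zero_mul,
        add_zero]
      nlinarith [mul_nonneg (Nat.cast_nonneg (α := ℝ) j) hτ.le]
    have hE : qexp τ / qexp z * qexp τ ^ j = qexp (-(z - (j + 1) * τ)) := by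
      rw [← qexp_nat_mul, ← qexp_sub, ← qexp_add]
      ring_nf
    rw [hE, ← tsum_one_div_sub_int_pow_of_im_neg hs him]
    refine tsum_congr fun l ↦ ?_
    simp only [latticePt]
    push_cast
    ring_nf

lemma tsum_one_div_int_sq : ∑' l : ℤ, 1 / (l : ℂ) ^ 2 = (π : ℂ) ^ 2 / 3 := by
  have h := EisensteinSeries.e2Summand_zero_eq_two_riemannZeta_two UpperHalfPlane.I
  rw [riemannZeta_two] at h
  simp only [EisensteinSeries.e2Summand, EisensteinSeries.eisSummand] at h
  rw [show (π : ℂ) ^ 2 / 3 = 2 * ((π : ℂ) ^ 2 / 6) by ring, ← h]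
  exact tsum_congr fun l ↦ by simp [zpow_neg]

lemma hasSum_G2 {τ : ℂ} (hτ : 0 < τ.im) :
    HasSum (fun k : ℤ ↦ ∑' l : ℤ, 1 / latticePt τ (k, l) ^ 2) (G2 τ) := by
  have hq := norm_qexp_lt_one hτ
  have hpos : Summable fun j : ℕ ↦ ∑' l : ℤ, 1 / latticePt τ ((j + 1 : ℕ), l) ^ 2 := by
    refine ((hasSum_lambertSum 1 hq hq).mul_left
      ((-1) ^ (1 + 1) * ((2 * π * I) ^ (1 + 1) / (Nat.factorial 1 : ℂ)))).summable.congr fun j ↦ ?_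
    have him : 0 < (((j + 1 : ℕ) : ℂ) * τ).im := by
      simp only [mul_im, natCast_re, natCast_im, zero_mul, add_zero]
      positivity
    rw [← pow_succ', ← qexp_nat_mul, ← tsum_one_div_sub_int_pow le_rfl him, ← tsum_comp_neg]
    refine tsum_congr fun l ↦ ?_
    simp [latticePt, sub_eq_add_neg]
  have heven (j : ℕ) : ∑' l : ℤ, 1 / latticePt τ (-(j : ℤ), l) ^ 2 =
      ∑' l : ℤ, 1 / latticePt τ (j, l) ^ 2 := by
    rw [← tsum_comp_neg]
    refine tsum_congr fun l ↦ ?_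
    simp only [latticePt]
    push_cast
    ring_nf
  have hnat := (summable_nat_add_iff (f := fun j : ℕ ↦ ∑' l : ℤ, 1 / latticePt τ (j, l) ^ 2)
    1).mp hpos
  have hS : Summable fun k : ℤ ↦ ∑' l : ℤ, 1 / latticePt τ (k, l) ^ 2 :=
    Summable.of_nat_of_neg hnat (by simpa only [heven] using hnat)
  have hG : G2 τ = ∑' k : ℤ, ∑' l : ℤ, 1 / latticePt τ (k, l) ^ 2 := by
    rw [← apply_add_tsum_subtype_ne hS 0, G2, ← tsum_one_div_int_sq]
    simp [latticePt]
  rw [hG]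
  exact hS.hasSum

lemma mem_integerComplement_of_im_ne_zero {w : ℂ} (hw : w.im ≠ 0) :
    w ∈ Complex.integerComplement := by
  rintro ⟨n, rfl⟩
  simp at hw

lemma hasSum_pi_mul_cot {x : ℂ} (hx : x = 0 ∨ x ∈ Complex.integerComplement) :
    HasSum (fun n : ℕ+ ↦ 1 / (x - n) + 1 / (x + n)) (π * cot (π * x) - 1 / x) := by
  rcases hx with rfl | hx
  · simp [Complex.cot]
  · have hS : Summable fun n : ℕ+ ↦ 1 / (x - n) + 1 / (x + n) := by
      refine (summable_pnat_iff_summable_succ (f := fun n : ℕ ↦ 1 / (x - n) + 1 / (x + n))).mpr ?_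
      simpa [cotTerm] using summable_cotTerm hx
    rw [cot_series_rep hx, add_sub_cancel_left]
    exact hS.hasSum

lemma summable_one_div_add_int_sq (a : ℂ) : Summable fun l : ℤ ↦ 1 / (a + l) ^ 2 := by
  have h := EisensteinSeries.linear_right_summable a 1 (k := 2) le_rfl
  refine h.congr fun l ↦ ?_
  norm_cast
  simp

lemma tsum_wp1_row {z a : ℂ} (ha : a = 0 ∨ a ∈ Complex.integerComplement)
    (hw : z - a ∈ Complex.integerComplement)
    (hS : Summable fun l : ℤ ↦ 1 / (z - (a + l)) + 1 / (a + l) + z / (a + l) ^ 2) :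
    ∑' l : ℤ, (1 / (z - (a + l)) + 1 / (a + l) + z / (a + l) ^ 2) =
      π * cot (π * (z - a)) + π * cot (π * a) + z * ∑' l : ℤ, 1 / (a + l) ^ 2 := by
  have hE : Summable fun l : ℤ ↦ z / (a + l) ^ 2 :=
    ((summable_one_div_add_int_sq a).mul_left z).congr fun l ↦ by ring
  have hg : Summable fun l : ℤ ↦ 1 / (z - (a + l)) + 1 / (a + l) :=
    (hS.sub hE).congr fun l ↦ by ring
  have hpos : Summable fun n : ℕ+ ↦ 1 / (z - (a + (n : ℤ))) + 1 / (a + (n : ℤ)) :=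
    hg.comp_injective fun _ _ h ↦ by simpa using h
  have hneg : Summable fun n : ℕ+ ↦
      1 / (z - (a + (-(n : ℤ) : ℤ))) + 1 / (a + (-(n : ℤ) : ℤ)) :=
    hg.comp_injective fun _ _ h ↦ by simpa using h
  have hcot := (hasSum_pi_mul_cot (Or.inr hw)).add (hasSum_pi_mul_cot ha)
  have hsum : ∑' l : ℤ, (1 / (z - (a + l)) + 1 / (a + l)) =
      π * cot (π * (z - a)) + π * cot (π * a) := by
    rw [tsum_int_eq_zero_add_tsum_pnat hg, add_assoc, ← hpos.tsum_add hneg]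
    rw [(hcot.congr_fun fun n : ℕ+ ↦ ?_).tsum_eq]
    · simp
      ring
    · push_cast
      ring_nf
  rw [hg.tsum_add hE, hsum, ← tsum_mul_left]
  simp only [mul_one_div]

lemma pi_mul_cot_eq_of_im_pos {w : ℂ} (hw : 0 < w.im) :
    π * cot (π * w) + π * I =
      -(2 * π * I) * ∑' n : ℕ, ((n + 1 : ℕ) : ℂ) ^ 0 * qexp w ^ (n + 1) := by
  have h := pi_mul_cot_pi_q_exp ⟨w, hw⟩
  have hS := summable_geometric_of_norm_lt_one (norm_qexp_lt_one hw)
  change _ = _ - _ * ∑' n : ℕ, qexp w ^ n at h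
  rw [hS.tsum_eq_zero_add] at h
  simp only [pow_zero, one_mul]
  linear_combination h

lemma pi_mul_cot_eq_of_im_neg {w : ℂ} (hw : w.im < 0) :
    π * cot (π * w) - π * I =
      2 * π * I * ∑' n : ℕ, ((n + 1 : ℕ) : ℂ) ^ 0 * qexp (-w) ^ (n + 1) := by
  have h := pi_mul_cot_eq_of_im_pos (w := -w) (by simpa using hw)
  have hodd : cot (π * -w) = -cot (π * w) := by
    simp [Complex.cot, neg_div', div_neg]
  rw [hodd] at h
  linear_combination -h

lemma hasSum_row_cot {τ z : ℂ} (hz1 : 0 < z.im) (hz2 : z.im < τ.im) :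
    HasSum (fun k : ℤ ↦ π * cot (π * (z - k * τ)) + π * cot (π * (k * τ)))
      (-(π * I) - Pser 0 (qexp z) (qexp τ)) := by
  have hτ : 0 < τ.im := hz1.trans hz2
  have hq := norm_qexp_lt_one hτ
  have hx := norm_qexp_lt_one hz1
  have hqx : ‖qexp τ / qexp z‖ < 1 := by
    rw [← qexp_sub]
    exact norm_qexp_lt_one (by simpa using hz2)
  have hzneg : HasSum (fun j : ℕ ↦ π * cot (π * (z + j * τ)) + π * I)
      (-(2 * π * I) * lambertSum 0 (qexp z) (qexp τ)) := by
    refine ((hasSum_lambertSum 0 hx hq).mul_left _).congr_fun fun j ↦ ?_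
    rw [pi_mul_cot_eq_of_im_pos, qexp_add, qexp_nat_mul]
    simp only [add_im, mul_im, natCast_re, natCast_im, zero_mul, add_zero]
    positivity
  have hzpos : HasSum (fun j : ℕ ↦ π * cot (π * (z - (j + 1) * τ)) - π * I)
      (2 * π * I * lambertSum 0 (qexp τ / qexp z) (qexp τ)) := by
    refine ((hasSum_lambertSum 0 hqx hq).mul_left _).congr_fun fun j ↦ ?_
    rw [pi_mul_cot_eq_of_im_neg, ← qexp_nat_mul, ← qexp_sub, ← qexp_add]
    · ring_nf
    · simp only [sub_im, mul_im, add_re, add_im, natCast_re, natCast_im, one_re, one_im, zero_mul,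
        add_zero]
      nlinarith [mul_nonneg (Nat.cast_nonneg (α := ℝ) j) hτ.le]
  have him (j : ℕ) : 0 < (((j : ℂ) + 1) * τ).im := by
    simp only [mul_im, add_re, add_im, natCast_re, natCast_im, one_re, one_im, zero_mul, add_zero]
    positivity
  have hqj (j : ℕ) : qexp ((j + 1) * τ) = qexp τ * qexp τ ^ j := by
    rw [← pow_succ', ← qexp_nat_mul]
    push_cast
    rfl
  have hpos : HasSum (fun j : ℕ ↦ π * cot (π * ((j + 1) * τ)) + π * I)
      (-(2 * π * I) * lambertSum 0 (qexp τ) (qexp τ)) := by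
    refine ((hasSum_lambertSum 0 hq hq).mul_left _).congr_fun fun j ↦ ?_
    rw [pi_mul_cot_eq_of_im_pos (him j), hqj]
  have hneg : HasSum (fun j : ℕ ↦ π * cot (π * (-(j * τ))) - π * I)
      (-(π * I) + 2 * π * I * lambertSum 0 (qexp τ) (qexp τ)) := by
    have h0 : π * cot (π * (-(((0 : ℕ) : ℂ) * τ))) - π * I = -(π * I) := by simp [Complex.cot]
    rw [← h0]
    refine HasSum.zero_add (f := fun j : ℕ ↦ π * cot (π * (-(j * τ))) - π * I) ?_
    refine ((hasSum_lambertSum 0 hq hq).mul_left _).congr_fun fun j ↦ ?_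
    rw [Nat.cast_succ, pi_mul_cot_eq_of_im_neg (by rw [neg_im]; linarith [him j]), neg_neg, hqj]
  have hP : -(π * I) - Pser 0 (qexp z) (qexp τ) =
      (-(2 * π * I) * lambertSum 0 (qexp z) (qexp τ) +
        (-(π * I) + 2 * π * I * lambertSum 0 (qexp τ) (qexp τ))) +
      (2 * π * I * lambertSum 0 (qexp τ / qexp z) (qexp τ) +
        -(2 * π * I) * lambertSum 0 (qexp τ) (qexp τ)) := by
    rw [Pser_eq_lambertSum 0 hx hqx hq]
    simp only [zero_add, pow_one, Nat.factorial_zero, Nat.cast_one, div_one, pow_zero, one_mul]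
    ring
  rw [hP]
  apply hasSum_int_of_neg_of_succ
  · refine (hzneg.add hneg).congr_fun fun j ↦ ?_
    push_cast
    ring_nf
  · refine (hzpos.add hpos).congr_fun fun j ↦ ?_
    push_cast
    ring

lemma im_sub_intCast_mul_ne_zero (k : ℤ) {τ z : ℂ} (hz1 : 0 < z.im) (hz2 : z.im < τ.im) :
    (z - k * τ).im ≠ 0 := by
  have hτ : 0 < τ.im := hz1.trans hz2
  simp only [sub_im, mul_im, intCast_re, intCast_im, zero_mul, add_zero]
  rcases le_or_gt k 0 with hk | hk
  · have : (k : ℝ) ≤ 0 := mod_cast hk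
    nlinarith
  · have : (1 : ℝ) ≤ k := mod_cast hk
    nlinarith

lemma wp1_eq {τ z : ℂ} (hz1 : 0 < z.im) (hz2 : z.im < τ.im) :
    wp1 z τ = -(Pser 0 (qexp z) (qexp τ) - (G2 τ * z - π * I)) := by
  have hτ : 0 < τ.im := hz1.trans hz2
  have h := (hasSum_row_cot hz1 hz2).add ((hasSum_G2 hτ).mul_left z)
  rw [wp1_eq_tsum hτ]
  have hrow (k : ℤ) : ∑' l : ℤ, (1 / (z - latticePt τ (k, l)) + 1 / latticePt τ (k, l) +
      z / (latticePt τ (k, l)) ^ 2) = π * cot (π * (z - k * τ)) + π * cot (π * (k * τ)) +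
        z * ∑' l : ℤ, 1 / latticePt τ (k, l) ^ 2 := by
    simp only [latticePt]
    refine tsum_wp1_row (a := k * τ) ?_
      (mem_integerComplement_of_im_ne_zero (im_sub_intCast_mul_ne_zero k hz1 hz2))
      (by simpa only [latticePt] using (summable_wp1 hτ z).prod_factor k)
    rcases eq_or_ne k 0 with rfl | hk
    · simp
    · exact .inr (mem_integerComplement_of_im_ne_zero (by simp [hk, hτ.ne']))
  rw [(h.congr_fun hrow).tsum_eq]
  ring

lemma wp2_eq {τ z : ℂ} (hz1 : 0 < z.im) (hz2 : z.im < τ.im) :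
    wp2 z τ = Pser 1 (qexp z) (qexp τ) - G2 τ := by
  have hτ : 0 < τ.im := hz1.trans hz2
  have h := (hasSum_row_pow le_rfl hz1 hz2).sub (hasSum_G2 hτ)
  rw [wp2_eq_tsum hτ]
  have hrow (k : ℤ) : ∑' l : ℤ, (1 / (z - latticePt τ (k, l)) ^ 2 - 1 / (latticePt τ (k, l)) ^ 2) =
      ∑' l : ℤ, 1 / (z - latticePt τ (k, l)) ^ (1 + 1) - ∑' l : ℤ, 1 / latticePt τ (k, l) ^ 2 := by
    have hE : Summable fun l : ℤ ↦ 1 / latticePt τ (k, l) ^ 2 := summable_one_div_add_int_sq (k * τ)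
    refine Summable.tsum_sub ?_ hE
    exact (((summable_wp2 hτ z).prod_factor k).add hE).congr fun l ↦ by simp
  rw [(h.congr_fun hrow).tsum_eq]
  ring

lemma wpHigh_eq {τ z : ℂ} {s : ℕ} (hs : 2 ≤ s) (hz1 : 0 < z.im) (hz2 : z.im < τ.im) :
    wpHigh (s + 1) z τ = (-1) ^ (s + 1) * Pser s (qexp z) (qexp τ) := by
  rw [wpHigh, (summable_wpHigh (hz1.trans hz2) z (by lia)).tsum_prod]
  exact (hasSum_row_pow (by lia) hz1 hz2).tsum_eq

/-- For `m ≥ 1`, `τ ∈ ℍ`, and `z` with `0 < Im z < Im τ`: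
`℘_m(z;τ) = (−1)^m·( P_m(q_z; q_τ) − D_m(z;τ) )`. -/
theorem wp_eq_Pseries (m : ℕ) (hm : 1 ≤ m) (τ z : ℂ) (hτ : 0 < τ.im)
    (hz1 : 0 < z.im) (hz2 : z.im < τ.im) :
    wp m z τ = (-1 : ℂ) ^ m * (Pser (m - 1) (qexp z) (qexp τ) - Dterm m z τ) := by
  obtain ⟨s, rfl⟩ : ∃ s, m = s + 1 := ⟨m - 1, by lia⟩
  rcases s with _ | _ | s
  · simpa [wp, Dterm] using wp1_eq hz1 hz2
  · simpa [wp, Dterm] using wp2_eq hz1 hz2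
  · simpa [wp, Dterm] using wpHigh_eq (s := s + 2) (by lia) hz1 hz2
end

section
/- Let m ≥ 1 be an integer, let g = (A B; C D) ∈ SL₂(ℤ), let τ ∈ ℍ, and let z ∈ ℂ ∖ Λ_τ. Then (Cτ+D)^{−m}·℘_m( z/(Cτ+D) ; (Aτ+B)/(Cτ+D) ) = ℘_m(z;τ). -/
open Complex Real

/-- The permutation `(k, l) ↦ (k, l) g` of `ℤ²` given by `g ∈ SL₂(ℤ)`. -/
def rowActionEquiv (g : Matrix.SpecialLinearGroup (Fin 2) ℤ) : ℤ × ℤ ≃ ℤ × ℤ where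
  toFun p := (p.1 * g 0 0 + p.2 * g 1 0, p.1 * g 0 1 + p.2 * g 1 1)
  invFun p := (p.1 * g 1 1 - p.2 * g 1 0, p.2 * g 0 0 - p.1 * g 0 1)
  left_inv p := by
    have h := g.det_coe
    rw [Matrix.det_fin_two] at h
    ext
    · linear_combination p.1 * h
    · linear_combination p.2 * h
  right_inv p := by
    have h := g.det_coe
    rw [Matrix.det_fin_two] at h
    ext
    · linear_combination p.1 * h
    · linear_combination p.2 * h

lemma rowActionEquiv_zero (g : Matrix.SpecialLinearGroup (Fin 2) ℤ) :
    rowActionEquiv g (0, 0) = (0, 0) := by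
  simp [rowActionEquiv]

/-- The restriction of `rowActionEquiv` to the nonzero vectors. -/
def rowActionEquivNeZero (g : Matrix.SpecialLinearGroup (Fin 2) ℤ) :
    {p : ℤ × ℤ // p ≠ (0, 0)} ≃ {p : ℤ × ℤ // p ≠ (0, 0)} :=
  (rowActionEquiv g).subtypeEquiv fun p => by
    rw [← (rowActionEquiv g).injective.ne_iff (x := p), rowActionEquiv_zero]

lemma denom_ne_zero_of_im_pos (g : Matrix.SpecialLinearGroup (Fin 2) ℤ) {τ : ℂ}
    (hτ : 0 < τ.im) : ((g 1 0 : ℤ) * τ + (g 1 1 : ℤ) : ℂ) ≠ 0 := by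
  intro h
  have him := congrArg Complex.im h
  have hre := congrArg Complex.re h
  have hc : g 1 0 = 0 := by simpa [hτ.ne'] using him
  have hd : g 1 1 = 0 := by simpa [hc] using hre
  have hdet := g.det_coe
  rw [Matrix.det_fin_two] at hdet
  simp [hc, hd] at hdet

lemma latticePt_moebius (g : Matrix.SpecialLinearGroup (Fin 2) ℤ) {τ : ℂ}
    (hj : ((g 1 0 : ℤ) * τ + (g 1 1 : ℤ) : ℂ) ≠ 0) (p : ℤ × ℤ) :
    latticePt (((g 0 0 : ℤ) * τ + (g 0 1 : ℤ)) / ((g 1 0 : ℤ) * τ + (g 1 1 : ℤ))) p =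
      latticePt τ (rowActionEquiv g p) / ((g 1 0 : ℤ) * τ + (g 1 1 : ℤ)) := by
  rw [eq_div_iff hj, latticePt, latticePt, add_mul, mul_assoc, div_mul_cancel₀ _ hj]
  simp only [rowActionEquiv, Equiv.coe_fn_mk]
  push_cast
  ring

lemma inv_pow_mul_one_div_div_pow {j : ℂ} (hj : j ≠ 0) (m : ℕ) (x : ℂ) :
    (j ^ m)⁻¹ * (1 / (x / j) ^ m) = 1 / x ^ m := by
  rw [div_pow, one_div_div, ← mul_div_assoc, inv_mul_cancel₀ (pow_ne_zero m hj)]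

/-- Modular invariance of `℘_m`: for `m ≥ 1`, `g = (A B; C D) ∈ SL₂(ℤ)`, `τ ∈ ℍ` and
`z ∉ Λ_τ`, `(Cτ+D)^{−m}·℘_m( z/(Cτ+D) ; (Aτ+B)/(Cτ+D) ) = ℘_m(z;τ)`. -/
theorem wp_modular_invariance (m : ℕ) (hm : 1 ≤ m)
    (g : Matrix.SpecialLinearGroup (Fin 2) ℤ) (τ z : ℂ) (hτ : 0 < τ.im)
    (hz : ∀ p : ℤ × ℤ, z ≠ latticePt τ p) :
    ((g 1 0 : ℤ) * τ + (g 1 1 : ℤ)) ^ (-(m : ℤ)) *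
      wp m (z / ((g 1 0 : ℤ) * τ + (g 1 1 : ℤ)))
        (((g 0 0 : ℤ) * τ + (g 0 1 : ℤ)) / ((g 1 0 : ℤ) * τ + (g 1 1 : ℤ))) =
      wp m z τ := by
  have hj := denom_ne_zero_of_im_pos g hτ
  have hlat := latticePt_moebius g hj
  generalize ((g 1 0 : ℤ) * τ + (g 1 1 : ℤ) : ℂ) = j at *
  generalize ((g 0 0 : ℤ) * τ + (g 0 1 : ℤ) : ℂ) / j = τ' at *
  have key := inv_pow_mul_one_div_div_pow hj
  rw [zpow_neg, zpow_natCast]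
  unfold wp
  split_ifs with h1 h2
  · subst h1
    have key₁ : ∀ x : ℂ, (j ^ 1)⁻¹ * (1 / (x / j)) = 1 / x := fun x => by
      simpa using key 1 x
    have key₂ : ∀ x : ℂ, (j ^ 1)⁻¹ * (z / j / (x / j) ^ 2) = z / x ^ 2 := fun x => by
      rw [div_eq_mul_one_div z (x ^ 2), ← key 2 x]
      field_simp
    rw [wp1, wp1, mul_add, key₁, ← tsum_mul_left,
      ← (rowActionEquivNeZero g).tsum_eq (fun q : {p : ℤ × ℤ // p ≠ (0, 0)} =>
        1 / (z - latticePt τ q.1) + 1 / latticePt τ q.1 + z / (latticePt τ q.1) ^ 2)]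
    congr 1
    refine tsum_congr fun p => ?_
    rw [hlat, ← sub_div, mul_add, mul_add, key₁, key₁, key₂]
    rfl
  · subst h2
    rw [wp2, wp2, mul_add, key, ← tsum_mul_left,
      ← (rowActionEquivNeZero g).tsum_eq (fun q : {p : ℤ × ℤ // p ≠ (0, 0)} =>
        1 / (z - latticePt τ q.1) ^ 2 - 1 / (latticePt τ q.1) ^ 2)]
    congr 1
    refine tsum_congr fun p => ?_
    rw [hlat, ← sub_div, mul_sub, key, key]
    rfl
  · rw [wpHigh, wpHigh, ← tsum_mul_left,
      ← (rowActionEquiv g).tsum_eq (fun q => 1 / (z - latticePt τ q) ^ m)]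
    refine tsum_congr fun p => ?_
    rw [hlat, ← sub_div, key]
end

section
/- For every τ ∈ ℍ and every z ∈ ℂ ∖ Λ_τ, ℘₁(z+1;τ) = ℘₁(z;τ) + G₂(τ). -/
open Complex Real

open Filter Topology

lemma tsum_eq_add_tsum_ne {α : Type*} {f : α → ℂ} (hf : Summable f) (a : α) :
    ∑' x, f x = f a + ∑' x : {x // x ≠ a}, f x := by
  rw [← hf.tsum_subtype_add_tsum_subtype_compl {a}, tsum_singleton]
  rfl

/-- A summable two-sided telescoping series whose terms come from a function vanishing at infinity
has sum zero. -/
lemma tsum_int_sub_eq_zero {g : ℤ → ℂ} (hg : Tendsto g cofinite (𝓝 0))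
    (hs : Summable fun l : ℤ ↦ g (l - 1) - g l) : ∑' l : ℤ, (g (l - 1) - g l) = 0 := by
  have hsum (N : ℕ) : ∑ l ∈ Finset.Icc (-(N : ℤ)) N, (g (l - 1) - g l) = g (-N - 1) - g N := by
    induction N with
    | zero => simp
    | succ N ih =>
      rw [← Finset.sum_subset (s₁ := {-(N : ℤ) - 1, (N : ℤ) + 1} ∪ Finset.Icc (-(N : ℤ)) N),
        Finset.sum_union, ih, Finset.sum_pair (by lia)]
      · push_cast
        rw [show (N : ℤ) + 1 - 1 = N by ring, show -((N : ℤ) + 1) - 1 = -N - 1 - 1 by ring]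
        ring
      · simp [Finset.disjoint_left]
      · intro l
        simp only [Finset.mem_union, Finset.mem_insert, Finset.mem_singleton, Finset.mem_Icc]
        lia
      · intro l
        simp only [Finset.mem_union, Finset.mem_insert, Finset.mem_singleton, Finset.mem_Icc]
        lia
  have hIcc : Tendsto (fun N : ℕ ↦ Finset.Icc (-(N : ℤ)) N) atTop atTop :=
    tendsto_atTop_finset_of_monotone
      (fun a b hab l hl ↦ by simp only [Finset.mem_Icc] at *; lia)
      (fun l ↦ ⟨l.natAbs, by simp only [Finset.mem_Icc]; lia⟩)
  refine tendsto_nhds_unique (hs.hasSum.comp hIcc) ?_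
  have h₁ : Tendsto (fun N : ℕ ↦ g (-N - 1)) atTop (𝓝 0) := by
    rw [← Nat.cofinite_eq_atTop]
    exact hg.comp (Function.Injective.tendsto_cofinite fun a b h ↦ by simpa using h)
  have h₂ : Tendsto (fun N : ℕ ↦ g N) atTop (𝓝 0) := by
    rw [← Nat.cofinite_eq_atTop]
    exact hg.comp Nat.cast_injective.tendsto_cofinite
  simpa only [Function.comp_def, hsum, sub_zero] using h₁.sub h₂

lemma tendsto_one_div_sub_intCast (u : ℂ) :
    Tendsto (fun l : ℤ ↦ 1 / (u - l)) cofinite (𝓝 0) := by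
  have hinv : Tendsto (fun l : ℤ ↦ ((l : ℝ))⁻¹) cofinite (𝓝 0) :=
    tendsto_inv₀_cobounded.comp (by
      simpa using! Int.isClosedEmbedding_coe_real.tendsto_cocompact)
  have h := ((EisensteinSeries.linear_inv_isBigO_right 1 (-u)).trans_tendsto hinv).neg
  rw [neg_zero] at h
  refine h.congr fun l ↦ ?_
  rw [one_div, ← inv_neg]
  congr 1
  push_cast
  ring

lemma summable_norm_latticePt_pow_three {τ : ℂ} (hτ : 0 < τ.im) :
    Summable fun p : ℤ × ℤ ↦ (‖latticePt τ p‖ ^ 3)⁻¹ := by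
  have h : Summable fun x : Fin 2 → ℤ ↦ ‖(x 0 : ℂ) * τ + x 1‖ ^ (-3 : ℝ) :=
    Summable.of_nonneg_of_le (fun _ ↦ by positivity)
      (EisensteinSeries.summand_bound ⟨τ, hτ⟩ (by norm_num))
      ((EisensteinSeries.summable_one_div_norm_rpow (by norm_num)).mul_left _)
  rw [← (finTwoArrowEquiv ℤ).symm.summable_iff] at h
  refine h.congr fun p ↦ ?_
  simp only [Function.comp_apply, finTwoArrowEquiv_symm_apply, Matrix.cons_val_zero,
    Matrix.cons_val_one, latticePt]
  rw [Real.rpow_neg (norm_nonneg _)]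
  norm_cast

/-- The summand of `wp1`; division by zero makes its value at `p = (0, 0)` equal to `1 / z`. -/
noncomputable def wp1Term (τ z : ℂ) (p : ℤ × ℤ) : ℂ :=
  1 / (z - latticePt τ p) + 1 / latticePt τ p + z / latticePt τ p ^ 2

lemma summable_wp1Term {τ : ℂ} (hτ : 0 < τ.im) (z : ℂ) : Summable (wp1Term τ z) := by
  have hs := summable_norm_latticePt_pow_three hτ
  refine Summable.of_norm_bounded_eventually (hs.mul_left (2 * ‖z‖ ^ 2)) ?_
  have hsmall : ∀ᶠ p : ℤ × ℤ in cofinite, (‖latticePt τ p‖ ^ 3)⁻¹ < ((2 * ‖z‖ + 1) ^ 3)⁻¹ :=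
    hs.tendsto_cofinite_zero.eventually_lt_const (by positivity)
  filter_upwards [hsmall, (Set.finite_singleton (0, 0)).compl_mem_cofinite] with p hp hp0
  have hw : latticePt τ p ≠ 0 := latticePt_ne_zero hτ hp0
  unfold wp1Term
  generalize latticePt τ p = w at *
  have hwpos : 0 < ‖w‖ := norm_pos_iff.mpr hw
  have hlarge : 2 * ‖z‖ + 1 < ‖w‖ :=
    lt_of_pow_lt_pow_left₀ 3 hwpos.le ((inv_lt_inv₀ (by positivity) (by positivity)).mp hp)
  have hzw : ‖w‖ / 2 ≤ ‖z - w‖ := by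
    have := norm_sub_norm_le w z
    rw [norm_sub_rev] at this
    linarith [norm_nonneg z]
  have hzw0 : z - w ≠ 0 := norm_pos_iff.mp (by linarith)
  have hterm : 1 / (z - w) + 1 / w + z / w ^ 2 = z ^ 2 / (w ^ 2 * (z - w)) := by
    field_simp
    ring
  rw [hterm, norm_div, norm_mul, norm_pow, norm_pow]
  calc ‖z‖ ^ 2 / (‖w‖ ^ 2 * ‖z - w‖) ≤ ‖z‖ ^ 2 / (‖w‖ ^ 2 * (‖w‖ / 2)) := by gcongr
    _ = 2 * ‖z‖ ^ 2 * (‖w‖ ^ 3)⁻¹ := by field_simp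

lemma wp1_eq_tsum_s9 {τ : ℂ} (hτ : 0 < τ.im) (z : ℂ) : wp1 z τ = ∑' p, wp1Term τ z p := by
  rw [tsum_eq_add_tsum_ne (summable_wp1Term hτ z) (0, 0)]
  simp [wp1, wp1Term, latticePt]

lemma summable_one_div_row_sq (τ : ℂ) (k : ℤ) :
    Summable fun l : ℤ ↦ 1 / ((k : ℂ) * τ + l) ^ 2 := by
  refine (EisensteinSeries.linear_right_summable τ k (k := 2) le_rfl).congr fun l ↦ ?_
  rw [one_div]
  norm_cast

lemma tsum_wp1Term_row_sub {τ : ℂ} (hτ : 0 < τ.im) (z : ℂ) (k : ℤ) :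
    ∑' l : ℤ, (wp1Term τ (z + 1) (k, l) - wp1Term τ z (k, l)) =
      ∑' l : ℤ, 1 / ((k : ℂ) * τ + l) ^ 2 := by
  set g : ℤ → ℂ := fun l ↦ 1 / (z - k * τ - l) with hg
  have hrow (l : ℤ) : wp1Term τ (z + 1) (k, l) - wp1Term τ z (k, l) =
      (g (l - 1) - g l) + 1 / ((k : ℂ) * τ + l) ^ 2 := by
    simp only [wp1Term, latticePt, hg]
    push_cast
    rw [show z - k * τ - ((l : ℂ) - 1) = z + 1 - (k * τ + l) by ring,
      show z - k * τ - (l : ℂ) = z - (k * τ + l) by ring]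
    ring
  have hsq := summable_one_div_row_sq τ k
  have hsum : Summable fun l : ℤ ↦ wp1Term τ (z + 1) (k, l) - wp1Term τ z (k, l) :=
    ((summable_wp1Term hτ (z + 1)).sub (summable_wp1Term hτ z)).prod_factor k
  have htel : Summable fun l : ℤ ↦ g (l - 1) - g l :=
    (hsum.sub hsq).congr fun l ↦ by rw [hrow, add_sub_cancel_right]
  rw [tsum_congr hrow, htel.tsum_add hsq,
    tsum_int_sub_eq_zero (tendsto_one_div_sub_intCast _) htel, zero_add]

lemma tsum_int_one_div_sq : ∑' l : ℤ, 1 / (l : ℂ) ^ 2 = (Real.pi : ℂ) ^ 2 / 3 := by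
  have h := two_mul_riemannZeta_eq_tsum_int_inv_pow_of_even (k := 2) le_rfl even_two
  simp only [one_div, ← h, Nat.cast_ofNat, riemannZeta_two]
  ring

/-- Quasi-periodicity of `℘₁` in the direction `1`:
`℘₁(z+1;τ) = ℘₁(z;τ) + G₂(τ)`. -/
theorem wp1_quasiperiodic_one (τ z : ℂ) (hτ : 0 < τ.im)
    (hz : ∀ p : ℤ × ℤ, z ≠ latticePt τ p) :
    wp1 (z + 1) τ = wp1 z τ + G2 τ := by
  have hs := (summable_wp1Term hτ (z + 1)).sub (summable_wp1Term hτ z)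
  have hrows : Summable fun k : ℤ ↦ ∑' l : ℤ, 1 / ((k : ℂ) * τ + l) ^ 2 :=
    hs.prod.congr fun k ↦ tsum_wp1Term_row_sub hτ z k
  rw [← sub_eq_iff_eq_add', wp1_eq_tsum_s9 hτ, wp1_eq_tsum_s9 hτ,
    ← (summable_wp1Term hτ (z + 1)).tsum_sub (summable_wp1Term hτ z), hs.tsum_prod,
    tsum_congr (tsum_wp1Term_row_sub hτ z), tsum_eq_add_tsum_ne hrows 0, G2]
  simp [← tsum_int_one_div_sq]
end

section
/- For every g = (A B; C D) ∈ SL₂(ℤ) and every τ ∈ ℍ, G₂( (Aτ+B)/(Cτ+D) ) = (Cτ+D)²·G₂(τ) − 2πi·C·(Cτ+D). -/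
open Complex Real

open UpperHalfPlane in
/-- For `m ≠ 0` the row sums `∑ₙ (mz+n)⁻²` agree with the row sums of the absolutely convergent
double series `∑ ((mz+n)²(mz+n+1))⁻¹`, the difference being a telescoping series of sum zero. -/
lemma e2Summand_eq_tsum_of_ne_zero (z : ℍ) {m : ℤ} (hm : m ≠ 0)
    (hs : Summable fun n : ℤ ↦ (((m : ℂ) * z + n) ^ 2 * (m * z + n + 1))⁻¹) :
    EisensteinSeries.e2Summand m z = ∑' n : ℤ, (((m : ℂ) * z + n) ^ 2 * (m * z + n + 1))⁻¹ := by
  have ht := EisensteinSeries.summable_right_one_div_linear_sub_one_div_linear_succ z m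
  have h0 := EisensteinSeries.tsum_symmetricIco_linear_sub_linear_add_one_eq_zero z m
  rw [tsum_eq_of_summable_unconditional ht] at h0
  rw [← add_zero (∑' n : ℤ, (((m : ℂ) * z + n) ^ 2 * (m * z + n + 1))⁻¹), ← h0,
    ← hs.tsum_add ht, EisensteinSeries.e2Summand]
  refine tsum_congr fun n ↦ ?_
  have h1 : (m : ℂ) * z + n ≠ 0 := by
    simpa using linear_ne_zero (cd := ![(m : ℝ), n]) z (by simp [hm])
  have h2 : (m : ℂ) * z + n + 1 ≠ 0 := by
    simpa [add_assoc] using linear_ne_zero (cd := ![(m : ℝ), n + 1]) z (by simp [hm])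
  simp only [EisensteinSeries.eisSummand, Matrix.cons_val_zero, Matrix.cons_val_one, zpow_neg,
    zpow_ofNat]
  field_simp
  ring

open UpperHalfPlane in
/-- The row sums of the weight two Eisenstein series are unconditionally summable. -/
lemma summable_e2Summand (z : ℍ) : Summable fun m : ℤ ↦ EisensteinSeries.e2Summand m z := by
  have hv : Summable fun v : Fin 2 → ℤ ↦ (((v 0 : ℂ) * z + v 1) ^ 2 * (v 0 * z + v 1 + 1))⁻¹ := by
    apply EisensteinSeries.summable_of_isBigO_rpow_norm (a := 3) (by norm_num)
    simpa [pow_three, pow_two, ← mul_assoc] using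
      ((EisensteinSeries.isBigO_linear_add_const_vec z 0 1).mul
        (EisensteinSeries.isBigO_linear_add_const_vec z 0 0)).mul
        (EisensteinSeries.isBigO_linear_add_const_vec z 0 0)
  have hp : Summable fun p : ℤ × ℤ ↦ (((p.1 : ℂ) * z + p.2) ^ 2 * (p.1 * z + p.2 + 1))⁻¹ :=
    (finTwoArrowEquiv ℤ).symm.summable_iff.mpr hv
  refine hp.prod.congr_cofinite ?_
  filter_upwards [Filter.eventually_cofinite_ne (0 : ℤ)] with m hm
  exact (e2Summand_eq_tsum_of_ne_zero z hm (hp.prod_factor m)).symm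

open UpperHalfPlane in
/-- On the upper half-plane `G2` agrees with Mathlib's symmetrically summed Eisenstein series. -/
lemma G2_coe_eq (z : ℍ) : G2 (z : ℂ) = EisensteinSeries.G2 z := by
  have hs := summable_e2Summand z
  rw [EisensteinSeries.G2, tsum_eq_of_summable_unconditional hs,
    ← hs.tsum_subtype_add_tsum_subtype_compl {0}, tsum_singleton
    (f := fun m ↦ EisensteinSeries.e2Summand m z),
    EisensteinSeries.e2Summand_zero_eq_two_riemannZeta_two, riemannZeta_two, G2]
  congr 1
  · ring
  · refine tsum_congr fun m ↦ tsum_congr fun l ↦ ?_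
    simp [EisensteinSeries.eisSummand, zpow_ofNat]

/-- Quasimodular transformation of `G₂`: for `g = (A B; C D) ∈ SL₂(ℤ)` and `τ ∈ ℍ`,
`G₂((Aτ+B)/(Cτ+D)) = (Cτ+D)²·G₂(τ) − 2πi·C·(Cτ+D)`. -/
theorem G2_modular_transformation (g : Matrix.SpecialLinearGroup (Fin 2) ℤ)
    (τ : ℂ) (hτ : 0 < τ.im) :
    G2 (((g 0 0 : ℤ) * τ + (g 0 1 : ℤ)) / ((g 1 0 : ℤ) * τ + (g 1 1 : ℤ))) =
      ((g 1 0 : ℤ) * τ + (g 1 1 : ℤ)) ^ 2 * G2 τ -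
        2 * Real.pi * Complex.I * (g 1 0 : ℤ) * ((g 1 0 : ℤ) * τ + (g 1 1 : ℤ)) := by
  lift τ to UpperHalfPlane using hτ
  have hsmul := UpperHalfPlane.coe_specialLinearGroup_apply g τ
  have hden : UpperHalfPlane.denom g τ = (g 1 0 : ℤ) * (τ : ℂ) + (g 1 1 : ℤ) :=
    ModularGroup.denom_apply g τ
  have hne := UpperHalfPlane.denom_ne_zero g τ
  have h := congrFun (EisensteinSeries.G2_slash_action g) τ
  rw [ModularForm.SL_slash_apply, Pi.sub_apply, EisensteinSeries.D2, zpow_neg, zpow_ofNat] at h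
  simp only [algebraMap_int_eq, eq_intCast, Complex.ofReal_intCast] at hsmul
  rw [← hsmul, G2_coe_eq, G2_coe_eq, ← hden]
  field_simp at h
  linear_combination h
end
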